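/- arXiv:math/0012029 — 2 statements merged into one kernel-verified Lean document; each statement's English description precedes it below -/
import Mathlib

section
/- For each ordered pair (α,β) in {(132,231), (132,312), (213,231), (213,312), (231,132), (231,213), (312,132), (312,213)} of patterns of length three, and for every n ≥ 3, the number of permutations of {1,…,n} that avoid α and contain β exactly once is s_n(α;β) = 2^{n−3}. -/
/-- Number of occurrences of the pattern `α ∈ S_k` in the permutation `π ∈ S_n`:
the number of strictly increasing choices of `k` indices such that the corresponding
subword of `π` is order-isomorphic to `α`. -/
noncomputable def occCount {k n : ℕ} (α : Equiv.Perm (Fin k)) (π : Equiv.Perm (Fin n)) : ℕ :=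
  Nat.card {f : Fin k → Fin n // StrictMono f ∧ ∀ a b : Fin k, α a < α b ↔ π (f a) < π (f b)}

/-- `π` avoids the pattern `α`. -/
def avoids {k n : ℕ} (α : Equiv.Perm (Fin k)) (π : Equiv.Perm (Fin n)) : Prop :=
  occCount α π = 0

/-- `π` contains the pattern `α` exactly once. -/
def containsOnce {k n : ℕ} (α : Equiv.Perm (Fin k)) (π : Equiv.Perm (Fin n)) : Prop :=
  occCount α π = 1

/-- The pattern `123` (as a permutation of `Fin 3`, 0-indexed). -/
def p123 : Equiv.Perm (Fin 3) := ⟨![0,1,2], ![0,1,2], by decide, by decide⟩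
/-- The pattern `132`. -/
def p132 : Equiv.Perm (Fin 3) := ⟨![0,2,1], ![0,2,1], by decide, by decide⟩
/-- The pattern `213`. -/
def p213 : Equiv.Perm (Fin 3) := ⟨![1,0,2], ![1,0,2], by decide, by decide⟩
/-- The pattern `231`. -/
def p231 : Equiv.Perm (Fin 3) := ⟨![1,2,0], ![2,0,1], by decide, by decide⟩
/-- The pattern `312`. -/
def p312 : Equiv.Perm (Fin 3) := ⟨![2,0,1], ![1,2,0], by decide, by decide⟩
/-- The pattern `321`. -/
def p321 : Equiv.Perm (Fin 3) := ⟨![2,1,0], ![2,1,0], by decide, by decide⟩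

/-- `s_n(α;β)`: the number of permutations of `{1,…,n}` that avoid `α` and contain `β`
exactly once. -/
noncomputable def sAvoidContain (α β : Equiv.Perm (Fin 3)) (n : ℕ) : ℕ :=
  Nat.card {π : Equiv.Perm (Fin n) // avoids α π ∧ containsOnce β π}

/-- `s_n(∅;{α,β})`: the number of permutations of `{1,…,n}` that contain each of `α` and `β`
exactly once. -/
noncomputable def sContainBoth (α β : Equiv.Perm (Fin 3)) (n : ℕ) : ℕ :=
  Nat.card {π : Equiv.Perm (Fin n) // containsOnce α π ∧ containsOnce β π}

theorem occCount_reverse {k n : ℕ} (α : Equiv.Perm (Fin k)) (π : Equiv.Perm (Fin n)) :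
    occCount (Fin.revPerm.trans α) (Fin.revPerm.trans π) = occCount α π := by
  unfold occCount
  refine Nat.card_congr ⟨fun f => ⟨fun a => (f.1 a.rev).rev, ?_, ?_⟩,
    fun f => ⟨fun a => (f.1 a.rev).rev, ?_, ?_⟩, ?_, ?_⟩
  · intro a b h
    exact Fin.rev_lt_rev.2 (f.2.1 (Fin.rev_lt_rev.2 h))
  · intro a b
    simpa using f.2.2 a.rev b.rev
  · intro a b h
    exact Fin.rev_lt_rev.2 (f.2.1 (Fin.rev_lt_rev.2 h))
  · intro a b
    simpa using f.2.2 a.rev b.rev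
  · intro f; ext; simp
  · intro f; ext; simp

theorem occCount_complement {k n : ℕ} (α : Equiv.Perm (Fin k)) (π : Equiv.Perm (Fin n)) :
    occCount (α.trans Fin.revPerm) (π.trans Fin.revPerm) = occCount α π := by
  unfold occCount
  refine Nat.card_congr (Equiv.subtypeEquivRight fun f => ?_)
  simp only [Equiv.trans_apply, Fin.revPerm_apply, Fin.rev_lt_rev]
  exact and_congr_right fun _ => forall_comm

theorem occCount_symm {k n : ℕ} (α : Equiv.Perm (Fin k)) (π : Equiv.Perm (Fin n)) :
    occCount α.symm π.symm = occCount α π := by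
  unfold occCount
  refine Nat.card_congr ⟨fun f => ⟨fun a => π.symm (f.1 (α a)), ?_, ?_⟩,
    fun f => ⟨fun a => π (f.1 (α.symm a)), ?_, ?_⟩, ?_, ?_⟩
  · intro a b h
    have := (f.2.2 (α a) (α b))
    simp only [Equiv.symm_apply_apply] at this
    exact this.1 h
  · intro a b
    simp [f.2.1.lt_iff_lt]
  · intro a b h
    have := (f.2.2 (α.symm a) (α.symm b))
    simp only [Equiv.apply_symm_apply] at this
    exact this.1 h
  · intro a b
    simp [f.2.1.lt_iff_lt]
  · intro f; ext; simp
  · intro f; ext; simp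

theorem sAvoidContain_reverse (α β : Equiv.Perm (Fin 3)) (n : ℕ) :
    sAvoidContain (Fin.revPerm.trans α) (Fin.revPerm.trans β) n = sAvoidContain α β n := by
  unfold sAvoidContain
  refine (Nat.card_congr (Equiv.subtypeEquiv
    ⟨fun π => Fin.revPerm.trans π, fun π => Fin.revPerm.trans π, ?_, ?_⟩ fun π => ?_)).symm
  · intro π; ext; simp
  · intro π; ext; simp
  · simp [avoids, containsOnce, occCount_reverse]

theorem sAvoidContain_complement (α β : Equiv.Perm (Fin 3)) (n : ℕ) :
    sAvoidContain (α.trans Fin.revPerm) (β.trans Fin.revPerm) n = sAvoidContain α β n := by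
  unfold sAvoidContain
  refine (Nat.card_congr (Equiv.subtypeEquiv
    ⟨fun π => π.trans Fin.revPerm, fun π => π.trans Fin.revPerm, ?_, ?_⟩ fun π => ?_)).symm
  · intro π; ext; simp
  · intro π; ext; simp
  · simp [avoids, containsOnce, occCount_complement]

theorem sAvoidContain_symm (α β : Equiv.Perm (Fin 3)) (n : ℕ) :
    sAvoidContain α.symm β.symm n = sAvoidContain α β n := by
  unfold sAvoidContain
  refine (Nat.card_congr (Equiv.subtypeEquiv
    ⟨fun π => π.symm, fun π => π.symm, ?_, ?_⟩ fun π => ?_)).symm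
  · intro π; ext; simp
  · intro π; ext; simp
  · simp [avoids, containsOnce, occCount_symm]

/-- Insert the new maximum at position `p`. -/
def insMax {n : ℕ} (p : Fin (n + 1)) (σ : Equiv.Perm (Fin n)) : Equiv.Perm (Fin (n + 1)) :=
  ((finSuccEquiv' p).trans (Equiv.optionCongr σ)).trans (finSuccEquiv' (Fin.last n)).symm

theorem insMax_self {n : ℕ} (p : Fin (n + 1)) (σ : Equiv.Perm (Fin n)) :
    insMax p σ p = Fin.last n := by
  simp [insMax]

theorem insMax_succAbove {n : ℕ} (p : Fin (n + 1)) (σ : Equiv.Perm (Fin n)) (j : Fin n) :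
    insMax p σ (p.succAbove j) = (σ j).castSucc := by
  simp [insMax]

theorem exists_insMax {n : ℕ} (π : Equiv.Perm (Fin (n + 1))) (p : Fin (n + 1))
    (h : π p = Fin.last n) : ∃ σ, π = insMax p σ := by
  let τ : Equiv.Perm (Option (Fin n)) :=
    ((finSuccEquiv' p).symm.trans π).trans (finSuccEquiv' (Fin.last n))
  have hτ : τ none = none := by simp [τ, h]
  refine ⟨Equiv.removeNone τ, ?_⟩
  have h2 : Equiv.optionCongr (Equiv.removeNone τ) = τ := by
    ext1 x
    cases x with
    | none => simp [hτ]
    | some x =>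
      simp only [Equiv.optionCongr_apply, Option.map_some]
      refine Equiv.removeNone_some τ ?_
      rcases hx : τ (some x) with _ | y
      · rw [← hτ] at hx
        simpa using τ.injective hx
      · exact ⟨y, rfl⟩
  ext1 x
  simp [insMax, h2, τ]

theorem insMax_injective {n : ℕ} (p : Fin (n + 1)) : Function.Injective (insMax p) := by
  intro σ τ h
  ext1 j
  have := congrArg (fun e => e (p.succAbove j)) h
  simpa [insMax_succAbove] using this

/-- Peak patterns: the middle entry is the largest. -/
def IsPeak (α : Equiv.Perm (Fin 3)) : Prop := α 0 < α 1 ∧ α 2 < α 1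

theorem occCount_insMax {n : ℕ} (α : Equiv.Perm (Fin 3)) (hα : IsPeak α) (p : Fin (n + 1))
    (hp : p = 0 ∨ p = Fin.last n) (σ : Equiv.Perm (Fin n)) :
    occCount α (insMax p σ) = occCount α σ := by
  unfold occCount
  symm
  refine Nat.card_congr (Equiv.ofBijective (fun f => ⟨fun a => p.succAbove (f.1 a), ?_, ?_⟩)
    ⟨?_, ?_⟩)
  · exact (Fin.strictMono_succAbove p).comp f.2.1
  · intro a b
    simpa [insMax_succAbove] using f.2.2 a b
  · intro f g h
    ext1
    funext a
    have := congrFun (congrArg Subtype.val h) a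
    simpa using this
  · rintro ⟨g, hg, hg2⟩
    have h01 : g 0 < g 1 := hg (by decide)
    have h12 : g 1 < g 2 := hg (by decide)
    have hne : ∀ a, g a ≠ p := by
      intro a ha
      have hmax : ∀ b, ¬ α a < α b := by
        intro b hb
        rw [hg2, ha, insMax_self] at hb
        exact absurd hb (not_lt.2 (Fin.le_last _))
      have ha1 : a = 1 := by
        fin_cases a
        · exact absurd hα.1 (hmax 1)
        · rfl
        · exact absurd hα.2 (hmax 1)
      subst ha1
      rcases hp with rfl | rfl
      · rw [ha] at h01
        exact absurd h01 (Fin.not_lt_zero _)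
      · rw [ha] at h12
        exact absurd h12 (not_lt.2 (Fin.le_last _))
    choose f hf using fun a => Fin.exists_succAbove_eq (hne a)
    refine ⟨⟨f, ?_, ?_⟩, ?_⟩
    · intro a b hab
      have := hg hab
      rwa [← hf, ← hf, Fin.succAbove_lt_succAbove_iff] at this
    · intro a b
      rw [hg2, ← hf, ← hf, insMax_succAbove, insMax_succAbove, Fin.castSucc_lt_castSucc_iff]
    · ext1
      funext a
      exact hf a

/-- Explicit triples give occurrences. -/
theorem strictMono_triple {n : ℕ} {a b c : Fin n} (h : a < b) (h' : b < c) :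
    StrictMono ![a, b, c] := by
  intro x y hxy
  fin_cases x <;> fin_cases y <;> simp_all <;> exact h.trans h'

theorem occ_132 {n : ℕ} (π : Equiv.Perm (Fin n)) {a b c : Fin n} 
    (h1 : π a < π c) (h2 : π c < π b) (x y : Fin 3) :
    p132 x < p132 y ↔ π (![a, b, c] x) < π (![a, b, c] y) := by
  have h3 := h1.trans h2
  fin_cases x <;> fin_cases y <;>
    simp [p132, h1, h2, h3, h1.le, h2.le, h3.le]

theorem occ_231 {n : ℕ} (π : Equiv.Perm (Fin n)) {a b c : Fin n} 
    (h1 : π c < π a) (h2 : π a < π b) (x y : Fin 3) :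
    p231 x < p231 y ↔ π (![a, b, c] x) < π (![a, b, c] y) := by
  have h3 := h1.trans h2
  fin_cases x <;> fin_cases y <;>
    simp [p231, h1, h2, h3, h1.le, h2.le, h3.le]

theorem max_at_end {n : ℕ} (hn : 3 ≤ n) (π : Equiv.Perm (Fin (n + 1)))
    (h1 : avoids p132 π) (h2 : containsOnce p231 π) (p : Fin (n + 1))
    (hp : π p = Fin.last n) : p = 0 ∨ p = Fin.last n := by
  unfold avoids occCount at h1
  unfold containsOnce occCount at h2
  rw [Finite.card_eq_zero_iff] at h1
  obtain ⟨hs, -⟩ := Nat.card_eq_one_iff_unique.1 h2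
  have hmax : ∀ a, a ≠ p → π a < π p := by
    intro a ha
    rw [hp]
    refine lt_of_le_of_ne (Fin.le_last _) fun h => ha ?_
    exact π.injective (h.trans hp.symm)
  have hocc : ∀ a c, a < p → p < c → π c < π a := by
    intro a c ha hc
    by_contra hlt
    have hlt' : π a < π c := by
      refine lt_of_le_of_ne (not_lt.1 hlt) fun h => ?_
      exact (ha.trans hc).ne (π.injective h)
    exact h1.false ⟨![a, p, c], strictMono_triple ha hc, occ_132 π hlt' (hmax c hc.ne')⟩
  have huniq : ∀ a c a' c', a < p → p < c → a' < p → p < c' → a = a' ∧ c = c' := by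
    intro a c a' c' ha hc ha' hc'
    have := hs.elim
      ⟨![a, p, c], strictMono_triple ha hc, occ_231 π (hocc a c ha hc) (hmax a ha.ne)⟩
      ⟨![a', p, c'], strictMono_triple ha' hc', occ_231 π (hocc a' c' ha' hc') (hmax a' ha'.ne)⟩
    have h := congrArg Subtype.val this
    exact ⟨by simpa using congrFun h 0, by simpa using congrFun h 2⟩
  by_contra hcon
  push Not at hcon
  obtain ⟨q0, q1⟩ := hcon
  have r0 : 0 < p.val := Nat.pos_of_ne_zero fun h => q0 (Fin.ext h)
  have r1 : p.val < n := by
    have := Fin.val_ne_of_ne q1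
    have := p.2
    simp at *
    omega
  by_cases hp1 : p.val = 1
  · have := huniq ⟨0, by omega⟩ ⟨2, by omega⟩ ⟨0, by omega⟩ ⟨3, by omega⟩
      (by rw [Fin.lt_def]; dsimp only; omega) (by rw [Fin.lt_def]; dsimp only; omega)
      (by rw [Fin.lt_def]; dsimp only; omega) (by rw [Fin.lt_def]; dsimp only; omega)
    simp at this
  · have := huniq ⟨0, by omega⟩ ⟨n, by omega⟩ ⟨1, by omega⟩ ⟨n, by omega⟩
      (by rw [Fin.lt_def]; dsimp only; omega) (by rw [Fin.lt_def]; dsimp only; omega)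
      (by rw [Fin.lt_def]; dsimp only; omega) (by rw [Fin.lt_def]; dsimp only; omega)
    simp at this

theorem isPeak_132 : IsPeak p132 := by unfold IsPeak; decide
theorem isPeak_231 : IsPeak p231 := by unfold IsPeak; decide

/-- The two ends. -/
def endPos (n : ℕ) (b : Bool) : Fin (n + 1) := if b then 0 else Fin.last n

theorem endPos_or (n : ℕ) (b : Bool) : endPos n b = 0 ∨ endPos n b = Fin.last n := by
  cases b <;> simp [endPos]

theorem sAvoidContain_step {n : ℕ} (hn : 3 ≤ n) :
    sAvoidContain p132 p231 (n + 1) = 2 * sAvoidContain p132 p231 n := by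
  unfold sAvoidContain
  have : 2 = Nat.card Bool := by simp
  rw [this, ← Nat.card_prod]
  symm
  have key : ∀ b (σ : Equiv.Perm (Fin n)),
      (avoids p132 (insMax (endPos n b) σ) ∧ containsOnce p231 (insMax (endPos n b) σ)) ↔
      (avoids p132 σ ∧ containsOnce p231 σ) := by
    intro b σ
    unfold avoids containsOnce
    rw [occCount_insMax _ isPeak_132 _ (endPos_or n b), occCount_insMax _ isPeak_231 _ (endPos_or n b)]
  refine Nat.card_congr (Equiv.ofBijective
    (fun x => ⟨insMax (endPos n x.1) x.2.1, (key _ _).2 x.2.2⟩) ⟨?_, ?_⟩)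
  · rintro ⟨b, σ, hσ⟩ ⟨b', σ', hσ'⟩ h
    have h := congrArg Subtype.val h
    simp only at h
    have hb : endPos n b = endPos n b' := by
      apply (insMax (endPos n b) σ).injective
      rw [insMax_self, h, insMax_self]
    have hb' : b = b' := by
      have h0 : (0 : Fin (n + 1)) ≠ Fin.last n := by
        intro h
        have := congrArg Fin.val h
        simp at this
        omega
      cases b <;> cases b' <;> simp [endPos] at hb ⊢ <;> omega
    subst hb'
    have := insMax_injective _ h
    subst this
    rfl
  · rintro ⟨π, hπ⟩
    have hp : π (π.symm (Fin.last n)) = Fin.last n := by simp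
    have hb : ∃ b, π.symm (Fin.last n) = endPos n b := by
      rcases max_at_end hn π hπ.1 hπ.2 _ hp with h | h
      · exact ⟨true, by simp [h, endPos]⟩
      · exact ⟨false, by simp [h, endPos]⟩
    obtain ⟨b, hb⟩ := hb
    rw [hb] at hp
    obtain ⟨σ, rfl⟩ := exists_insMax π _ hp
    exact ⟨(b, ⟨σ, (key _ _).1 hπ⟩), rfl⟩

theorem strictMono_fin3 (f : Fin 3 → Fin 3) (hf : StrictMono f) : f = id := by
  have h01 : f 0 < f 1 := hf (by decide)
  have h12 : f 1 < f 2 := hf (by decide)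
  funext i
  fin_cases i <;> simp <;> omega

theorem perm_fin3 : ∀ α π : Equiv.Perm (Fin 3), (∀ a b, α a < α b ↔ π a < π b) → α = π := by
  decide

theorem sAvoidContain_base : sAvoidContain p132 p231 3 = 1 := by
  unfold sAvoidContain
  rw [Nat.card_eq_one_iff_unique]
  constructor
  · constructor
    have : ∀ π : Equiv.Perm (Fin 3), containsOnce p231 π → p231 = π := by
      intro π h
      unfold containsOnce occCount at h
      obtain ⟨-, ⟨f, hf, h⟩⟩ := Nat.card_eq_one_iff_unique.1 h
      rw [strictMono_fin3 f hf] at h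
      exact perm_fin3 _ _ h
    rintro ⟨π, hπ⟩ ⟨τ, hτ⟩
    ext1
    exact (this π hπ.2).symm.trans (this τ hτ.2)
  · refine ⟨p231, ?_, ?_⟩
    · unfold avoids occCount
      rw [Finite.card_eq_zero_iff]
      constructor
      rintro ⟨f, hf, h⟩
      rw [strictMono_fin3 f hf] at h
      exact absurd (perm_fin3 _ _ h) (by decide)
    · unfold containsOnce occCount
      rw [Nat.card_eq_one_iff_unique]
      refine ⟨⟨?_⟩, ⟨id, strictMono_id, fun a b => Iff.rfl⟩⟩
      rintro ⟨f, hf, -⟩ ⟨g, hg, -⟩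
      ext1
      exact (strictMono_fin3 f hf).trans (strictMono_fin3 g hg).symm

theorem sAvoidContain_main (n : ℕ) (hn : 3 ≤ n) :
    sAvoidContain p132 p231 n = 2 ^ (n - 3) := by
  induction n, hn using Nat.le_induction with
  | base => simpa using sAvoidContain_base
  | succ n hn ih =>
    rw [sAvoidContain_step hn, ih, ← pow_succ']
    congr 1
    omega

/-- Theorem 4.4: for each listed pair `(α,β)`, `s_n(α;β) = 2^{n−3}` for `n ≥ 3`. -/
theorem sAvoidContain_eq_of_mem_classE :
    ∀ p ∈ [(p132, p231), (p132, p312), (p213, p231), (p213, p312),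
           (p231, p132), (p231, p213), (p312, p132), (p312, p213)],
      ∀ n : ℕ, 3 ≤ n → sAvoidContain p.1 p.2 n = 2 ^ (n - 3) := by
  intro p hp n hn
  have h0 := sAvoidContain_main n hn
  have r := fun α β => sAvoidContain_reverse α β n
  have c := fun α β => sAvoidContain_complement α β n
  have s := fun α β => sAvoidContain_symm α β n
  have r132 : Fin.revPerm.trans p132 = p231 := by decide
  have r231 : Fin.revPerm.trans p231 = p132 := by decide
  have c132 : p132.trans Fin.revPerm = p312 := by decide
  have c231 : p231.trans Fin.revPerm = p213 := by decide
  have s132 : p132.symm = p132 := by decide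
  have s213 : p213.symm = p213 := by decide
  have s231 : p231.symm = p312 := by decide
  have s312 : p312.symm = p231 := by decide
  have e1 : sAvoidContain p231 p132 n = 2 ^ (n - 3) := by rw [← h0, ← r, r132, r231]
  have e2 : sAvoidContain p312 p213 n = 2 ^ (n - 3) := by rw [← h0, ← c p132, c132, c231]
  have e3 : sAvoidContain p213 p312 n = 2 ^ (n - 3) := by rw [← e1, ← c p231, c132, c231]
  have e4 : sAvoidContain p132 p312 n = 2 ^ (n - 3) := by rw [← h0, ← s p132 p231, s132, s231]
  have e5 : sAvoidContain p312 p132 n = 2 ^ (n - 3) := by rw [← e1, ← s p231 p132, s132, s231]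
  have e6 : sAvoidContain p231 p213 n = 2 ^ (n - 3) := by rw [← e2, ← s p312 p213, s213, s312]
  have e7 : sAvoidContain p213 p231 n = 2 ^ (n - 3) := by rw [← e3, ← s p213 p312, s213, s312]
  simp only [List.mem_cons, List.not_mem_nil, or_false] at hp
  rcases hp with rfl | rfl | rfl | rfl | rfl | rfl | rfl | rfl <;> assumption
end

section
/- For each ordered pair (α,β) in {(132,321), (213,321), (231,123), (312,123)} of patterns of length three, and for every n ≥ 3, the number of permutations of {1,…,n} that avoid α and contain β exactly once is s_n(α;β) = 2n−5. -/
section helpers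

theorem avoids_p132_iff {n : ℕ} (π : Equiv.Perm (Fin n)) :
    avoids p132 π ↔ ∀ i j l : Fin n, i < j → j < l → π i < π l → π l < π j → False := by
  unfold avoids occCount
  rw [Finite.card_eq_zero_iff, isEmpty_subtype]
  constructor
  · intro h i j l hij hjl h1 h2
    refine h ![i, j, l] ⟨?_, ?_⟩
    · rw [Fin.strictMono_iff_lt_succ]
      intro a
      fin_cases a <;> simpa
    · intro a b
      fin_cases a <;> fin_cases b <;> simp [p132] <;> order
  · rintro h f ⟨hm, hf⟩
    refine h (f 0) (f 1) (f 2) (hm (by decide)) (hm (by decide)) ?_ ?_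
    · exact (hf 0 2).1 (by decide)
    · exact (hf 2 1).1 (by decide)

theorem occ321_iff {n : ℕ} (π : Equiv.Perm (Fin n)) (f : Fin 3 → Fin n) :
    (StrictMono f ∧ ∀ a b : Fin 3, p321 a < p321 b ↔ π (f a) < π (f b)) ↔
    (f 0 < f 1 ∧ f 1 < f 2 ∧ π (f 2) < π (f 1) ∧ π (f 1) < π (f 0)) := by
  constructor
  · rintro ⟨hm, hf⟩
    exact ⟨hm (by decide), hm (by decide), (hf 2 1).1 (by decide), (hf 1 0).1 (by decide)⟩
  · rintro ⟨h1, h2, h3, h4⟩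
    refine ⟨?_, ?_⟩
    · rw [Fin.strictMono_iff_lt_succ]
      intro a
      fin_cases a <;> simpa
    · intro a b
      fin_cases a <;> fin_cases b <;> simp [p321] <;> order

theorem containsOnce_p321_iff {n : ℕ} (π : Equiv.Perm (Fin n)) :
    containsOnce p321 π ↔ ∃ i j l : Fin n, (i < j ∧ j < l ∧ π l < π j ∧ π j < π i) ∧
      ∀ i' j' l' : Fin n, i' < j' → j' < l' → π l' < π j' → π j' < π i' →
        i' = i ∧ j' = j ∧ l' = l := by
  unfold containsOnce occCount
  simp only [occ321_iff]
  rw [Nat.card_eq_one_iff_exists]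
  constructor
  · rintro ⟨⟨f, hf⟩, hu⟩
    refine ⟨f 0, f 1, f 2, hf, ?_⟩
    intro i j l h1 h2 h3 h4
    have := congrArg Subtype.val (hu ⟨![i, j, l], by simpa using ⟨h1, h2, h3, h4⟩⟩)
    simp only at this
    rw [← this]
    simp
  · rintro ⟨i, j, l, h, hu⟩
    refine ⟨⟨![i, j, l], by simpa using h⟩, ?_⟩
    rintro ⟨f, h1, h2, h3, h4⟩
    obtain ⟨e1, e2, e3⟩ := hu _ _ _ h1 h2 h3 h4
    apply Subtype.ext
    funext a
    fin_cases a <;> simp [e1, e2, e3]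

/-- the good set in terms of explicit inequalities -/
def Good {n : ℕ} (π : Equiv.Perm (Fin n)) : Prop :=
  (∀ i j l : Fin n, i < j → j < l → π i < π l → π l < π j → False) ∧
  ∃ i j l : Fin n, (i < j ∧ j < l ∧ π l < π j ∧ π j < π i) ∧
      ∀ i' j' l' : Fin n, i' < j' → j' < l' → π l' < π j' → π j' < π i' →
        i' = i ∧ j' = j ∧ l' = l

def fA (k p : ℕ) : ℕ :=
  if p = 0 then k else if p = 1 then 1 else if p = 2 then 0 else if p ≤ k then p - 1 else p

def fB (k p : ℕ) : ℕ :=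
  if p = 0 then 2 else if p = 1 then 1 else if p < k then p + 1 else if p = k then 0 else p

theorem fAB (k p : ℕ) (hk : 2 ≤ k) : fA k (fB k p) = p := by
  grind [fA, fB]

theorem fBA (k p : ℕ) (hk : 2 ≤ k) : fB k (fA k p) = p := by
  grind [fA, fB]

theorem fA_lt {n k p : ℕ} (hk : 2 ≤ k) (hn : k < n) (hp : p < n) : fA k p < n := by
  unfold fA; split_ifs <;> omega

theorem fB_lt {n k p : ℕ} (hk : 2 ≤ k) (hn : k < n) (hp : p < n) : fB k p < n := by
  unfold fB; split_ifs <;> omega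

def permA (n k : ℕ) (hk : 2 ≤ k) (hn : k < n) : Equiv.Perm (Fin n) where
  toFun p := ⟨fA k p, fA_lt hk hn p.2⟩
  invFun p := ⟨fB k p, fB_lt hk hn p.2⟩
  left_inv p := Fin.ext (fBA k p hk)
  right_inv p := Fin.ext (fAB k p hk)

theorem permA_val {n k : ℕ} (hk : 2 ≤ k) (hn : k < n) (p : Fin n) :
    (permA n k hk hn p).val = fA k p := rfl

theorem permB_val {n k : ℕ} (hk : 2 ≤ k) (hn : k < n) (p : Fin n) :
    ((permA n k hk hn).symm p).val = fB k p := rfl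

theorem good_A {n k : ℕ} (hk : 2 ≤ k) (hn : k < n) : Good (permA n k hk hn) := by
  refine ⟨?_, ⟨0, by omega⟩, ⟨1, by omega⟩, ⟨2, by omega⟩, ?_, ?_⟩
  · intro i j l h1 h2 h3 h4
    simp only [Fin.lt_def, permA_val] at *
    unfold fA at *
    split_ifs at * <;> omega
  · simp only [Fin.lt_def, permA_val]
    grind [fA]
  · intro i j l h1 h2 h3 h4
    simp only [Fin.lt_def, permA_val, Fin.ext_iff] at *
    unfold fA at *
    split_ifs at * <;> omega

theorem good_B {n k : ℕ} (hk : 2 ≤ k) (hn : k < n) : Good (permA n k hk hn).symm := by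
  refine ⟨?_, ⟨0, by omega⟩, ⟨1, by omega⟩, ⟨k, by omega⟩, ?_, ?_⟩
  · intro i j l h1 h2 h3 h4
    simp only [Fin.lt_def, permB_val] at *
    unfold fB at *
    split_ifs at * <;> omega
  · simp only [Fin.lt_def, permB_val]
    grind [fB]
  · intro i j l h1 h2 h3 h4
    simp only [Fin.lt_def, permB_val, Fin.ext_iff] at *
    unfold fB at *
    split_ifs at * <;> omega

theorem perm_unique {n : ℕ} (D : Fin n → Prop) (π σ : Equiv.Perm (Fin n))
    (hD : ∀ p, D p → π p = σ p)
    (hπ : ∀ p q, ¬ D p → ¬ D q → p < q → π p < π q)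
    (hσ : ∀ p q, ¬ D p → ¬ D q → p < q → σ p < σ q) : π = σ := by
  ext1 p
  induction p using WellFoundedLT.induction with
  | ind p ih =>
    by_cases hp : D p
    · exact hD p hp
    obtain ⟨r, hr⟩ := π.surjective (σ p)
    obtain ⟨s, hs⟩ := σ.surjective (π p)
    have hrD : ¬ D r := fun h => by
      have : r = p := σ.injective ((hD r h).symm.trans hr)
      exact hp (this ▸ h)
    have hsD : ¬ D s := fun h => by
      have : s = p := π.injective ((hD s h).trans hs)
      exact hp (this ▸ h)
    rcases lt_trichotomy r p with h | h | h
    · have : r = p := σ.injective ((ih r h).symm.trans hr)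
      omega
    · rw [← hr, h]
    · have h1 := hπ p r hp hrD h
      rw [hr, ← hs] at h1
      rcases lt_trichotomy s p with h' | h' | h'
      · have : s = p := π.injective ((ih s h').trans hs)
        omega
      · rw [← hs, h']
      · exact absurd (hσ p s hp hsD h') (by order)

theorem good_struct {n : ℕ} (π : Equiv.Perm (Fin n)) (h : Good π) :
    (∃ k hk hn, π = permA n k hk hn) ∨ (∃ k hk hn, 3 ≤ k ∧ π = (permA n k hk hn).symm) := by
  obtain ⟨h132, i, j, l, ⟨hij, hjl, hlj, hji⟩, hu⟩ := h
  have inj : ∀ p q, π p = π q → p = q := fun p q h => π.injective h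
  -- the first entry of the occurrence is at position 0
  have hi : ∀ p, ¬ p < i := fun p hp => by
    rcases lt_trichotomy (π p) (π j) with h | h | h
    · exact h132 p i j hp hij h hji
    · have := inj _ _ h; order
    · have := (hu p j l (by order) hjl hlj h).1; order
  have hj : ∀ p, i < p → ¬ p < j := fun p hp hpj => by
    rcases lt_trichotomy (π p) (π j) with h | h | h
    · rcases lt_trichotomy (π p) (π l) with h' | h' | h'
      · exact h132 p j l hpj hjl h' hlj
      · have := inj _ _ h'; order
      · have := (hu i p l hp (by order) h' (by order)).2.1; order
    · have := inj _ _ h; order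
    · have := (hu p j l hpj hjl hlj h).1; order
  have hi0 : i.val = 0 := by
    by_contra hne
    exact hi ⟨0, by omega⟩ (by rw [Fin.lt_def]; simp; omega)
  have hj1 : j.val = 1 := by
    by_contra hne
    exact hj ⟨1, by omega⟩ (by rw [Fin.lt_def]; simp; omega) (by rw [Fin.lt_def] at *; simp; omega)
  have hv : ∀ p, π p < π j → p = l := fun p hp => by
    have : j < p := by
      have h1 : p ≠ i := by rintro rfl; order
      have h2 : p ≠ j := by rintro rfl; order
      rw [Ne, Fin.ext_iff] at h1 h2
      rw [Fin.lt_def]; omega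
    exact (hu i j p hij this hp hji).2.2
  have hl0 : (π l).val = 0 := by
    by_contra hne
    obtain ⟨q, hq⟩ := π.surjective ⟨0, by omega⟩
    have h0 : (π q).val = 0 := by rw [hq]
    have := hv q (by rw [Fin.lt_def] at *; omega)
    subst this; exact hne h0
  have hj1' : (π j).val = 1 := by
    by_contra hne
    rw [Fin.lt_def] at hlj
    obtain ⟨q, hq⟩ := π.surjective ⟨1, by omega⟩
    have h0 : (π q).val = 1 := by rw [hq]
    have := hv q (by rw [Fin.lt_def] at *; omega)
    subst this; omega
  have hge : ∀ p, p ≠ l → p ≠ j → π j < π p := fun p h1 h2 => by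
    rcases lt_trichotomy (π p) (π j) with h | h | h
    · exact absurd (hv p h) h1
    · exact absurd (inj _ _ h) h2
    · exact h
  have hmono : ∀ p q, ¬ (p = i ∨ p = j ∨ p = l) → ¬ (q = i ∨ q = j ∨ q = l) → p < q →
      π p < π q := fun p q hp hq hpq => by
    push Not at hp hq
    by_contra hcon
    have hne : π q < π p := lt_of_le_of_ne (not_lt.1 hcon) (fun h => by
      have := inj _ _ h; order)
    have hjp : j < p := by
      have h1 := hp.1
      have h2 := hp.2.1
      rw [Ne, Fin.ext_iff] at h1 h2
      rw [Fin.lt_def]; omega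
    exact h132 j p q hjp hpq (hge q hq.2.2 hq.2.1) hne
  rw [Fin.lt_def] at *
  have hk2 : 2 ≤ (π i).val := by omega
  have hl2 : 2 ≤ l.val := by omega
  have key : l.val = 2 ∨ (π i).val = 2 := by
    by_contra hcon
    push Not at hcon
    obtain ⟨q, hq⟩ := π.surjective ⟨2, by omega⟩
    have hqv : (π q).val = 2 := by rw [hq]
    have hqi : q ≠ i := by rintro rfl; omega
    have hqj : q ≠ j := by rintro rfl; omega
    have hql : q ≠ l := by rintro rfl; omega
    have hq2 : q.val = 2 := by
      by_contra hne
      have h1 : (⟨2, by omega⟩ : Fin n) < q := by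
        rw [Ne, Fin.ext_iff] at hqi hqj
        rw [Fin.lt_def]; simp; omega
      have h2 : ¬ ((⟨2, by omega⟩ : Fin n) = i ∨ (⟨2, by omega⟩ : Fin n) = j ∨
          (⟨2, by omega⟩ : Fin n) = l) := by
        simp only [Fin.ext_iff]; omega
      have h3 := hmono _ q h2 (by tauto) h1
      have h4 := hge ⟨2, by omega⟩ (by tauto) (by tauto)
      rw [Fin.lt_def] at h3 h4
      omega
    have := (hu i q l (by rw [Fin.lt_def]; omega) (by rw [Fin.lt_def]; omega)
      (by rw [Fin.lt_def]; omega) (by rw [Fin.lt_def]; omega)).2.1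
    exact hqj this
  by_cases hl : l.val = 2
  · left
    refine ⟨(π i).val, hk2, (π i).2, ?_⟩
    refine perm_unique (fun p => p = i ∨ p = j ∨ p = l) _ _ ?_ hmono ?_
    · rintro p (rfl | rfl | rfl) <;> rw [Fin.ext_iff, permA_val] <;> unfold fA <;>
        split_ifs <;> omega
    · intro p q hp hq hpq
      simp only [Fin.ext_iff, Fin.lt_def, permA_val] at *
      unfold fA
      split_ifs <;> omega
  · right
    refine ⟨l.val, hl2, l.2, by omega, ?_⟩
    refine perm_unique (fun p => p = i ∨ p = j ∨ p = l) _ _ ?_ hmono ?_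
    · rintro p (rfl | rfl | rfl) <;> rw [Fin.ext_iff, permB_val] <;> unfold fB <;>
        split_ifs <;> omega
    · intro p q hp hq hpq
      simp only [Fin.ext_iff, Fin.lt_def, permB_val] at *
      unfold fB
      split_ifs <;> omega

theorem card_good (m : ℕ) : Nat.card {π : Equiv.Perm (Fin (m + 3)) // Good π} = 2 * m + 1 := by
  let g : Fin (m + 1) ⊕ Fin m → {π : Equiv.Perm (Fin (m + 3)) // Good π} :=
    Sum.elim (fun k => ⟨permA (m + 3) (k.val + 2) (by omega) (by omega), good_A _ _⟩)
      (fun k => ⟨(permA (m + 3) (k.val + 3) (by omega) (by omega)).symm, good_B _ _⟩)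
  have hg : Function.Bijective g := by
    constructor
    · rintro (a | a) (b | b) hab
      all_goals
        have h0 := congrArg (fun x => (x.val ⟨0, by omega⟩).val) hab
        have h2 := congrArg (fun x => (x.val ⟨2, by omega⟩).val) hab
        simp [g, permA_val, permB_val, fA, fB] at h0 h2
      · rw [Fin.ext h0]
      · have e : (permA (m + 3) (a.val + 3) (by omega) (by omega)).symm =
          (permA (m + 3) (b.val + 3) (by omega) (by omega)).symm := congrArg Subtype.val hab
        have h3 := congrArg (fun x : Equiv.Perm (Fin (m + 3)) => (x.symm ⟨0, by omega⟩).val) e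
        simp [permA_val, fA] at h3
        rw [Fin.ext h3]
    · rintro ⟨π, hπ⟩
      rcases good_struct π hπ with ⟨k, hk, hn, rfl⟩ | ⟨k, hk, hn, h3, rfl⟩
      · refine ⟨Sum.inl ⟨k - 2, by omega⟩, ?_⟩
        have : k - 2 + 2 = k := by omega
        simp [g, this]
      · refine ⟨Sum.inr ⟨k - 3, by omega⟩, ?_⟩
        have : k - 3 + 3 = k := by omega
        simp [g, this]
  rw [← Nat.card_eq_of_bijective g hg]
  simp
  omega

theorem base_case (n : ℕ) (hn : 3 ≤ n) : sAvoidContain p132 p321 n = 2 * n - 5 := by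
  obtain ⟨m, rfl⟩ := Nat.exists_eq_add_of_le' hn
  unfold sAvoidContain
  simp only [avoids_p132_iff, containsOnce_p321_iff]
  exact (card_good m).trans (by omega)

theorem occ_compl {k n : ℕ} (α : Equiv.Perm (Fin k)) (π : Equiv.Perm (Fin n)) :
    occCount (Fin.revPerm * α) (Fin.revPerm * π) = occCount α π := by
  unfold occCount
  refine Nat.card_congr (Equiv.subtypeEquivRight fun f => and_congr_right fun _ => ?_)
  simp only [Equiv.Perm.mul_apply, Fin.revPerm_apply, Fin.rev_lt_rev]
  exact forall_comm

theorem occ_rev {k n : ℕ} (α : Equiv.Perm (Fin k)) (π : Equiv.Perm (Fin n)) :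
    occCount (α * Fin.revPerm) (π * Fin.revPerm) = occCount α π := by
  unfold occCount
  refine Nat.card_congr ((Equiv.arrowCongr Fin.revPerm Fin.revPerm).subtypeEquiv fun f => ?_)
  refine and_congr ⟨fun h => ?_, fun h => ?_⟩ ⟨fun h a b => ?_, fun h a b => ?_⟩
  · intro a b hab
    simpa using h (Fin.rev_lt_rev.2 hab)
  · intro a b hab
    simpa using h (Fin.rev_lt_rev.2 hab)
  · simpa using h a.rev b.rev
  · simpa using h a.rev b.rev

theorem s_compl (α β : Equiv.Perm (Fin 3)) (n : ℕ) :
    sAvoidContain (Fin.revPerm * α) (Fin.revPerm * β) n = sAvoidContain α β n := by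
  unfold sAvoidContain
  refine (Nat.card_congr ((Equiv.mulLeft Fin.revPerm).subtypeEquiv fun π => ?_)).symm
  simp only [avoids, containsOnce, Equiv.coe_mulLeft, occ_compl]

theorem s_rev (α β : Equiv.Perm (Fin 3)) (n : ℕ) :
    sAvoidContain (α * Fin.revPerm) (β * Fin.revPerm) n = sAvoidContain α β n := by
  unfold sAvoidContain
  refine (Nat.card_congr ((Equiv.mulRight Fin.revPerm).subtypeEquiv fun π => ?_)).symm
  simp only [avoids, containsOnce, Equiv.coe_mulRight, occ_rev]

end helpers

/-- Theorem 4.5: for each listed pair `(α,β)`, `s_n(α;β) = 2n−5` for `n ≥ 3`. -/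
theorem sAvoidContain_eq_of_mem_classC2 :
    ∀ p ∈ [(p132, p321), (p213, p321), (p231, p123), (p312, p123)],
      ∀ n : ℕ, 3 ≤ n → sAvoidContain p.1 p.2 n = 2 * n - 5 := by
  have e1 : p231 = p132 * Fin.revPerm := by decide
  have e2 : p123 = p321 * Fin.revPerm := by decide
  have e3 : p312 = Fin.revPerm * p132 := by decide
  have e4 : p123 = Fin.revPerm * p321 := by decide
  have e5 : p213 = Fin.revPerm * p231 := by decide
  have e6 : p321 = Fin.revPerm * p123 := by decide
  have h231 : ∀ n : ℕ, 3 ≤ n → sAvoidContain p231 p123 n = 2 * n - 5 := fun n hn => by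
    rw [e1, e2, s_rev]; exact base_case n hn
  intro p hp n hn
  simp only [List.mem_cons, List.not_mem_nil, or_false] at hp
  rcases hp with rfl | rfl | rfl | rfl
  · exact base_case n hn
  · change sAvoidContain p213 p321 n = _
    rw [e5, e6, s_compl]; exact h231 n hn
  · exact h231 n hn
  · change sAvoidContain p312 p123 n = _
    rw [e3, e4, s_compl]; exact base_case n hn
end
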